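/- (Closed form of the iDEA cost function) For every φ ∈ ℝ, the cost Q_tx(φ) = (u_1 − exp(j·φ)·u_3)^† R (u_1 − exp(j·φ)·u_3) satisfies Q_tx(φ) = 4^{2K−1} · Σ_{k=1}^{K} σ_k² · sin²((ε_tx,k − φ)/2) · ∏_{m=1}^{K−1} sin²((ε_tx,k − ε̂_tx,m)/2) · ∏_{n=1}^{K−1} sin²((ε_rx,k − ε̂_rx,n)/2); in particular Q_tx(φ) is real and nonnegative. -/

import Mathlib

open scoped BigOperators

/-- Steering vector `a(ε) ∈ ℂ^{n+1}` with entries `exp(j·i·ε)`, `i = 0,…,n`. -/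
noncomputable def steer (n : ℕ) (ε : ℝ) : Fin (n + 1) → ℂ :=
  fun i => Complex.exp (Complex.I * ((i : ℕ) : ℂ) * (ε : ℂ))

/-- The vector `E(η_1,…,η_m) ∈ ℂ^{m+1}` defined recursively by
`E(η_1) = (1, −exp(j·η_1))` and
`E(η_1,…,η_p) = (E(η_1,…,η_{p−1}), 0) − exp(j·η_p)·(0, E(η_1,…,η_{p−1}))`
(with base case `E() = (1)`, which reproduces the stated base case at `m = 1`). -/
noncomputable def Evec : (m : ℕ) → (Fin m → ℝ) → (Fin (m + 1) → ℂ)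
  | 0, _ => fun _ => 1
  | m + 1, η => fun i =>
      Fin.snoc (α := fun _ => ℂ) (Evec m fun j => η j.castSucc) 0 i -
        Complex.exp (Complex.I * (η (Fin.last m) : ℂ)) *
          Fin.cons (α := fun _ => ℂ) 0 (Evec m fun j => η j.castSucc) i

/-- The cyclic down-shift matrix on `ℂ^{n+1}`: `(Lv)_0 = v_n`, `(Lv)_i = v_{i−1}` for `i ≥ 1`. -/
def Lmat (n : ℕ) : Matrix (Fin (n + 1)) (Fin (n + 1)) ℂ :=
  Matrix.of fun i l => if l = i - 1 then 1 else 0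

/-- Kronecker product of vectors: `(v ⊗ w)_{(i,l)} = v_i · w_l`. -/
def kron {a b : Type*} (v : a → ℂ) (w : b → ℂ) : a × b → ℂ :=
  fun p => v p.1 * w p.2

/-- `x^† y = Σ_i conj(x_i) · y_i`. -/
noncomputable def ip {n : Type*} [Fintype n] (x y : n → ℂ) : ℂ :=
  ∑ i, (starRingEnd ℂ) (x i) * y i

/-- `x^† M y = Σ_{i,l} conj(x_i) · M_{i,l} · y_l`. -/
noncomputable def qf {n : Type*} [Fintype n] (x : n → ℂ) (M : Matrix n n ℂ) (y : n → ℂ) : ℂ :=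
  ∑ i, ∑ l, (starRingEnd ℂ) (x i) * M i l * y l

/-- `E(η_1,…,η_Kp) ∈ ℂ^{Kp+1}` padded with a trailing zero, giving a vector in `ℂ^{Kp+2}`. -/
noncomputable def Epad (Kp : ℕ) (η : Fin Kp → ℝ) : Fin (Kp + 2) → ℂ :=
  Fin.snoc (Evec Kp η) 0

/-- `u_0 = Ẽ_tx ⊗ Ẽ_rx`. -/
noncomputable def u0 (Kp : ℕ) (ηt ηr : Fin Kp → ℝ) : Fin (Kp + 2) × Fin (Kp + 2) → ℂ :=
  kron (Epad Kp ηt) (Epad Kp ηr)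

/-- `u_1 = Ẽ_tx ⊗ (L·Ẽ_rx)`. -/
noncomputable def u1 (Kp : ℕ) (ηt ηr : Fin Kp → ℝ) : Fin (Kp + 2) × Fin (Kp + 2) → ℂ :=
  kron (Epad Kp ηt) ((Lmat (Kp + 1)).mulVec (Epad Kp ηr))

/-- `u_2 = (L·Ẽ_tx) ⊗ Ẽ_rx`. -/
noncomputable def u2 (Kp : ℕ) (ηt ηr : Fin Kp → ℝ) : Fin (Kp + 2) × Fin (Kp + 2) → ℂ :=
  kron ((Lmat (Kp + 1)).mulVec (Epad Kp ηt)) (Epad Kp ηr)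

/-- `u_3 = (L·Ẽ_tx) ⊗ (L·Ẽ_rx)`. -/
noncomputable def u3 (Kp : ℕ) (ηt ηr : Fin Kp → ℝ) : Fin (Kp + 2) × Fin (Kp + 2) → ℂ :=
  kron ((Lmat (Kp + 1)).mulVec (Epad Kp ηt)) ((Lmat (Kp + 1)).mulVec (Epad Kp ηr))

/-- The noiseless auto-correlation matrix `R = Σ_{k=1}^K σ_k² A_k A_k^†`, where
`A_k = a(ε_tx,k) ⊗ a(ε_rx,k)` and `σsq k` is the power `σ_k²`. -/
noncomputable def Rmat (K : ℕ) (εtx εrx σsq : Fin K → ℝ) :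
    Matrix (Fin (K + 1) × Fin (K + 1)) (Fin (K + 1) × Fin (K + 1)) ℂ :=
  Matrix.of fun p q => ∑ k, (σsq k : ℂ) *
    kron (steer K (εtx k)) (steer K (εrx k)) p *
    (starRingEnd ℂ) (kron (steer K (εtx k)) (steer K (εrx k)) q)

/-- The rank-one matrix `R_ε = a(ε) a(ε)^† ∈ ℂ^{(Kp+2)×(Kp+2)}`. -/
noncomputable def Rsingle (Kp : ℕ) (ε : ℝ) : Matrix (Fin (Kp + 2)) (Fin (Kp + 2)) ℂ :=
  Matrix.of fun i l => steer (Kp + 1) ε i * (starRingEnd ℂ) (steer (Kp + 1) ε l)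

/-- The iDEA cost `Q_tx(φ) = (u_1 − exp(j·φ)·u_3)^† R (u_1 − exp(j·φ)·u_3)`. -/
noncomputable def Qcost (Kp : ℕ) (εtx εrx σsq : Fin (Kp + 1) → ℝ)
    (ηt ηr : Fin Kp → ℝ) (φ : ℝ) : ℂ :=
  qf (u1 Kp ηt ηr - Complex.exp (Complex.I * (φ : ℂ)) • u3 Kp ηt ηr)
    (Rmat (Kp + 1) εtx εrx σsq)
    (u1 Kp ηt ηr - Complex.exp (Complex.I * (φ : ℂ)) • u3 Kp ηt ηr)

/-- The closed-form value `4^{2K−1} · Σ_k σ_k² sin²((ε_tx,k − φ)/2) ∏_m sin²((ε_tx,k − ε̂_tx,m)/2)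
∏_n sin²((ε_rx,k − ε̂_rx,n)/2)` (here `K = Kp + 1`, so `2K − 1 = 2·Kp + 1`). -/
noncomputable def Ssum (Kp : ℕ) (εtx εrx σsq : Fin (Kp + 1) → ℝ)
    (ηt ηr : Fin Kp → ℝ) (φ : ℝ) : ℝ :=
  (4 : ℝ) ^ (2 * Kp + 1) * ∑ k, σsq k * Real.sin ((εtx k - φ) / 2) ^ 2 *
    (∏ m, Real.sin ((εtx k - ηt m) / 2) ^ 2) *
    (∏ n, Real.sin ((εrx k - ηr n) / 2) ^ 2)

/-- The `k = K` term of `Ssum`, i.e. the lower bound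
`4^{2K−1} · σ_K² sin²((ε_tx,K − φ)/2) ∏_m sin²((ε_tx,K − ε̂_tx,m)/2) ∏_n sin²((ε_rx,K − ε̂_rx,n)/2)`. -/
noncomputable def Slb (Kp : ℕ) (εtx εrx σsq : Fin (Kp + 1) → ℝ)
    (ηt ηr : Fin Kp → ℝ) (φ : ℝ) : ℝ :=
  (4 : ℝ) ^ (2 * Kp + 1) * σsq (Fin.last Kp) *
    Real.sin ((εtx (Fin.last Kp) - φ) / 2) ^ 2 *
    (∏ m, Real.sin ((εtx (Fin.last Kp) - ηt m) / 2) ^ 2) *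
    (∏ n, Real.sin ((εrx (Fin.last Kp) - ηr n) / 2) ^ 2)

noncomputable def Sst (n : ℕ) (ε : ℝ) (x : Fin (n + 1) → ℂ) : ℂ :=
  ∑ i, (starRingEnd ℂ) (steer n ε i) * x i

lemma steer_castSucc (n : ℕ) (ε : ℝ) (i : Fin (n + 1)) :
    steer (n + 1) ε i.castSucc = steer n ε i := by
  simp [steer]

lemma steer_succ (n : ℕ) (ε : ℝ) (i : Fin (n + 1)) :
    steer (n + 1) ε i.succ = Complex.exp (Complex.I * ε) * steer n ε i := by
  simp only [steer, ← Complex.exp_add, Fin.val_succ]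
  congr 1
  push_cast
  ring

lemma Sst_snoc (n : ℕ) (ε : ℝ) (v : Fin (n + 1) → ℂ) :
    Sst (n + 1) ε (Fin.snoc (α := fun _ => ℂ) v 0) = Sst n ε v := by
  simp [Sst, Fin.sum_univ_castSucc (n := n + 1), steer_castSucc]

lemma Sst_cons (n : ℕ) (ε : ℝ) (v : Fin (n + 1) → ℂ) :
    Sst (n + 1) ε (Fin.cons (α := fun _ => ℂ) 0 v)
      = (starRingEnd ℂ) (Complex.exp (Complex.I * ε)) * Sst n ε v := by
  simp only [Sst, Fin.sum_univ_succ (n := n + 1), steer_succ, Fin.cons_zero, Fin.cons_succ,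
    map_mul, Finset.mul_sum, mul_zero, zero_add, mul_assoc]

lemma Sst_sub_smul (n : ℕ) (ε : ℝ) (c : ℂ) (v w : Fin (n + 1) → ℂ) :
    Sst n ε (fun i => v i - c * w i) = Sst n ε v - c * Sst n ε w := by
  simp only [Sst, Finset.mul_sum, ← Finset.sum_sub_distrib]
  exact Finset.sum_congr rfl fun i _ => by ring

/-- elementary factor -/
noncomputable def fac (ε η : ℝ) : ℂ :=
  1 - Complex.exp (Complex.I * η) * (starRingEnd ℂ) (Complex.exp (Complex.I * ε))

lemma Sst_Evec (m : ℕ) (ε : ℝ) (η : Fin m → ℝ) :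
    Sst m ε (Evec m η) = ∏ i, fac ε (η i) := by
  induction m with
  | zero => simp [Sst, Evec, steer]
  | succ m ih =>
    rw [Fin.prod_univ_castSucc, ← ih (fun j => η j.castSucc)]
    simp only [Evec]
    rw [Sst_sub_smul, Sst_snoc, Sst_cons, fac]
    ring

lemma Lmat_Epad (Kp : ℕ) (η : Fin Kp → ℝ) :
    (Lmat (Kp + 1)).mulVec (Epad Kp η) = Fin.cons (α := fun _ => ℂ) 0 (Evec Kp η) := by
  funext i
  have h : (Lmat (Kp + 1)).mulVec (Epad Kp η) i = Epad Kp η (i - 1) := by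
    simp [Lmat, Matrix.mulVec, dotProduct]
  rw [h]
  refine Fin.cases ?_ (fun k => ?_) i
  · have : (0 : Fin (Kp + 2)) - 1 = Fin.last (Kp + 1) := by
      rw [sub_eq_iff_eq_add]; simp
    rw [this]; simp [Epad]
  · have : (k.succ : Fin (Kp + 2)) - 1 = k.castSucc := by
      rw [sub_eq_iff_eq_add]; simp
    rw [this]; simp [Epad]

lemma fac_normSq (ε η : ℝ) : Complex.normSq (fac ε η) = 4 * Real.sin ((ε - η) / 2) ^ 2 := by
  have h : fac ε η = 1 - Complex.exp (((η - ε : ℝ) : ℂ) * Complex.I) := by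
    simp only [fac, ← Complex.exp_conj, ← Complex.exp_add]
    congr 2
    simp
    ring
  have h2 : Real.cos (η - ε) = 1 - 2 * Real.sin ((ε - η) / 2) ^ 2 := by
    rw [← Real.cos_neg, show -(η - ε) = 2 * ((ε - η) / 2) by ring, Real.cos_two_mul,
      Real.cos_sq']
    ring
  rw [h, Complex.normSq_apply]
  simp only [Complex.sub_re, Complex.sub_im, Complex.one_re, Complex.one_im,
    Complex.exp_ofReal_mul_I_re, Complex.exp_ofReal_mul_I_im]
  nlinarith [Real.sin_sq_add_cos_sq (η - ε)]

lemma qf_Rmat (K : ℕ) (εtx εrx σsq : Fin K → ℝ) (x : Fin (K + 1) × Fin (K + 1) → ℂ) :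
    qf x (Rmat K εtx εrx σsq) x = ∑ k, (σsq k : ℂ) *
      (Complex.normSq (∑ p, (starRingEnd ℂ) (kron (steer K (εtx k)) (steer K (εrx k)) p) * x p)
        : ℂ) := by
  simp only [qf, Rmat, Matrix.of_apply, Complex.normSq_eq_conj_mul_self, map_sum, map_mul,
    Complex.conj_conj, Finset.sum_mul_sum, Finset.mul_sum, Finset.sum_mul]
  rw [Finset.sum_congr rfl fun i _ => Finset.sum_comm, Finset.sum_comm]
  refine Finset.sum_congr rfl fun k _ => ?_
  rw [Finset.sum_comm]
  exact Finset.sum_congr rfl fun i _ => Finset.sum_congr rfl fun l _ => by ring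

lemma sum_kron (n : ℕ) (ε δ : ℝ) (v w : Fin (n + 1) → ℂ) :
    ∑ p, (starRingEnd ℂ) (kron (steer n ε) (steer n δ) p) * kron v w p
      = Sst n ε v * Sst n δ w := by
  simp only [Sst, Finset.sum_mul_sum, Fintype.sum_prod_type, kron, map_mul]
  exact Finset.sum_congr rfl fun i _ => Finset.sum_congr rfl fun l _ => by ring

lemma normSq_expI (ε : ℝ) : Complex.normSq (Complex.exp (Complex.I * ε)) = 1 := by
  rw [mul_comm, Complex.normSq_eq_norm_sq, Complex.norm_exp_ofReal_mul_I, one_pow]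

/-- closed form of the iDEA cost function: for every φ ∈ ℝ,
Q_tx(φ) = 4^{2K−1} · Σ_k σ_k² sin²((ε_tx,k − φ)/2) ∏_m sin²((ε_tx,k − ε̂_tx,m)/2)
∏_n sin²((ε_rx,k − ε̂_rx,n)/2); in particular Q_tx(φ) is real and nonnegative. -/
theorem statement18 (Kp : ℕ) (hKp : 1 ≤ Kp) (εtx εrx : Fin (Kp + 1) → ℝ)
    (σsq : Fin (Kp + 1) → ℝ) (hσ : ∀ k, 0 < σsq k) (ηt ηr : Fin Kp → ℝ) (φ : ℝ) :
    Qcost Kp εtx εrx σsq ηt ηr φ = ((Ssum Kp εtx εrx σsq ηt ηr φ : ℝ) : ℂ) ∧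
    0 ≤ Ssum Kp εtx εrx σsq ηt ηr φ := by
  constructor
  · have hx : u1 Kp ηt ηr - Complex.exp (Complex.I * (φ : ℂ)) • u3 Kp ηt ηr
        = kron (fun i => Epad Kp ηt i - Complex.exp (Complex.I * (φ : ℂ)) *
            (Fin.cons (α := fun _ => ℂ) 0 (Evec Kp ηt) : Fin (Kp + 2) → ℂ) i)
          (Fin.cons (α := fun _ => ℂ) 0 (Evec Kp ηr)) := by
      funext p
      simp only [u1, u3, Lmat_Epad, kron, Pi.sub_apply, Pi.smul_apply, smul_eq_mul]
      ring
    rw [Qcost, hx, qf_Rmat, Ssum, Finset.mul_sum, Complex.ofReal_sum]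
    refine Finset.sum_congr rfl fun k _ => ?_
    rw [sum_kron, Sst_sub_smul, Epad, Sst_snoc, Sst_cons, Sst_cons, Sst_Evec, Sst_Evec]
    rw [← mul_assoc (Complex.exp (Complex.I * (φ : ℂ))), ← one_sub_mul,
      show 1 - Complex.exp (Complex.I * (φ : ℂ)) *
        (starRingEnd ℂ) (Complex.exp (Complex.I * (εtx k : ℂ))) = fac (εtx k) φ from rfl,
      ← Complex.ofReal_mul]
    congr 1
    simp only [map_mul, map_prod, fac_normSq, Complex.normSq_conj, normSq_expI,
      Finset.prod_mul_distrib, Finset.prod_const, Finset.card_univ, Fintype.card_fin]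
    ring
  · refine mul_nonneg (by positivity) (Finset.sum_nonneg fun k _ => ?_)
    have := (hσ k).le
    have h1 : 0 ≤ ∏ m, Real.sin ((εtx k - ηt m) / 2) ^ 2 :=
      Finset.prod_nonneg fun _ _ => sq_nonneg _
    have h2 : 0 ≤ ∏ n, Real.sin ((εrx k - ηr n) / 2) ^ 2 :=
      Finset.prod_nonneg fun _ _ => sq_nonneg _
    positivity
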